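/- For all integers k >= 1, 0 <= l <= k-1 and r >= 0: \tilde{P}_{r,k,l} = \sum_{p=0}^{\lfloor r/2 \rfloor} ((l+1)/(kp+l+1)) * C((k+1)p+l, p) * C(r+2(k-1)p+2l, r-2p). -/

import Mathlib

open Finset

inductive Step : Type
  | u | d | h
deriving DecidableEq

/-- Lengths of maximal blocks of letters with `wt s ≠ none`, weighted by `wt`. -/
def runs (wt : Step → Option ℕ) : List Step → List ℕ
  | [] => []
  | s :: l =>
    match wt s, runs wt l with
    | none, r => r
    | some n, r =>
      match l with
      | [] => [n]
      | s' :: _ =>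
        match wt s' with
        | none => n :: r
        | some _ =>
          match r with
          | a :: rest => (n + a) :: rest
          | [] => [n]

def uRuns : List Step → List ℕ :=
  runs (fun s => match s with | Step.u => some 1 | _ => none)

def uhRuns (k : ℕ) : List Step → List ℕ :=
  runs (fun s => match s with | Step.u => some 1 | Step.h => some k | Step.d => none)

def alpha (i : ℕ) (w : List Step) : ℕ := (uRuns w).count i

def beta (i : ℕ) (w : List Step) : ℕ := (uRuns w).tail.count i

def IsNonneg (w : List Step) : Prop :=
  ∀ i : ℕ, (w.take i).count Step.d ≤ (w.take i).count Step.u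

def pathSet (m j : ℕ) : Set (List Step) :=
  {w | w.count Step.u = m ∧ w.count Step.d = m ∧ w.count Step.h = j ∧ IsNonneg w}

/-- no horizontal step lies on the x-axis -/
def NoLowH (w : List Step) : Prop :=
  ∀ (i : ℕ) (hi : i < w.length), w[i]'hi = Step.h →
    (w.take i).count Step.u ≠ (w.take i).count Step.d

def qSet (m j : ℕ) : Set (List Step) :=
  {w | w ∈ pathSet m j ∧ NoLowH w}

/-- normalized partial Bell polynomial (r!/m!) B_{m,r}(1!t₁,2!t₂,…) -/
def bellNorm (m r : ℕ) (t : ℕ → ℚ) : ℚ :=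
  ∑ f : Fin m → Fin (m + 1),
    if (∑ i : Fin m, (f i : ℕ)) = r ∧ (∑ i : Fin m, ((i : ℕ) + 1) * (f i : ℕ)) = m then
      (r.factorial : ℚ) / (∏ i : Fin m, ((f i : ℕ).factorial : ℚ)) * ∏ i : Fin m, t ((i : ℕ) + 1) ^ (f i : ℕ)
    else 0

/-- normalized potential polynomial  P_p^{(lam)}(1!t₁,2!t₂,…)/p! -/
def potential (lam p : ℕ) (t : ℕ → ℚ) : ℚ :=
  ∑ r ∈ Finset.range (p + 1), (Nat.choose lam r : ℚ) * bellNorm p r t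


/-- the number of k-paths of length k*r + 2*l in which every internal (u,h)-segment has
length divisible by k and the leftmost (u,h)-segment (if any) has length ≡ l (mod k);
a path with no (u,h)-segment qualifies exactly when l = 0. -/
noncomputable def tildeP (k l r : ℕ) : ℕ :=
  Set.ncard {w : List Step | IsNonneg w ∧ w.count Step.u = w.count Step.d ∧
    2 * w.count Step.u + k * w.count Step.h = k * r + 2 * l ∧
    (uhRuns k w = [] → l = 0) ∧
    (∀ a ∈ (uhRuns k w).head?, a % k = l % k) ∧
    (∀ a ∈ (uhRuns k w).tail, a % k = 0)}

/-!
Cut a word at its down-steps into possibly empty blocks. As empty blocks have length `0`, the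
segment condition of `tildeP` says that the leading block is `≡ l` and all later blocks are `≡ 0`
modulo `k`. This condition can be read off letter by letter, by remembering the residue `t` that
the current block still has to contribute: an up-step lowers `t` by one, a down-step requires
`t = 0`, and a horizontal step changes neither `t` nor the height `s`. Hence the horizontal steps
shuffle freely and contribute a binomial factor. Without them, while `t` is represented by a
positive number `t < k` an up-step is forced and keeps `s + t` constant; at `t = 0` a down-step
lowers `s + t` by one, while an up-step leads to `t = k - 1` and raises `s + t` by `k`. This is the
recursion of the Raney numbers.
-/

instance : Fintype Step := ⟨{Step.u, Step.d, Step.h}, by rintro (_ | _ | _) <;> simp⟩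

lemma Step.sum_eq {M : Type*} [AddCommMonoid M] (f : Step → M) :
    ∑ x, f x = f Step.u + (f Step.d + f Step.h) := by
  change ∑ x ∈ {Step.u, Step.d, Step.h}, f x = _
  simp

lemma Step.length_eq_count_add (w : List Step) :
    w.length = w.count Step.u + w.count Step.d + w.count Step.h := by
  rw [← Multiset.coe_card, ← Multiset.sum_count_eq_card (s := univ) (by simp), Step.sum_eq]
  simp [add_assoc]

lemma ncard_eq_sum_preimage_cons {α : Type*} [Fintype α] {S : Set (List α)} (hS : S.Finite)
    (hnil : [] ∉ S) : S.ncard = ∑ x, (List.cons x ⁻¹' S).ncard := by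
  have hunion : S = ⋃ x, List.cons x '' (List.cons x ⁻¹' S) := by
    ext (_ | ⟨x, w⟩)
    · simp [hnil]
    · simp
  have hdisj : Pairwise (Function.onFun Disjoint fun x => List.cons x '' (List.cons x ⁻¹' S)) := by
    intro x y hxy
    refine Set.disjoint_left.2 ?_
    rintro _ ⟨v, -, rfl⟩ ⟨w, -, hw⟩
    exact hxy (List.cons.inj hw).1.symm
  conv_lhs => rw [hunion]
  rw [Set.ncard_iUnion_of_finite (fun x => hS.subset (Set.image_preimage_subset _ _)) hdisj,
    finsum_eq_sum_of_fintype]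
  exact sum_congr rfl fun x _ => Set.ncard_image_of_injective _ List.cons_injective

section Blocks

variable (wt : Step → Option ℕ)

/-- The weight of the block of letters preceding the first separator, that is, the first letter
with `wt s = none`. The block may be empty and then has weight `0`. -/
def leadingBlock : List Step → ℕ
  | [] => 0
  | s :: w =>
    match wt s with
    | none => 0
    | some n => n + leadingBlock w

/-- The weights of the blocks following each separator. In contrast to `runs`, empty blocks are
recorded, with weight `0`. -/
def internalBlocks : List Step → List ℕ
  | [] => []
  | s :: w =>
    match wt s with
    | none => leadingBlock wt w :: internalBlocks w
    | some _ => internalBlocks w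

variable {wt}

lemma runs_eq_filter_blocks (hwt : ∀ s, wt s ≠ some 0) (w : List Step) :
    runs wt w = (leadingBlock wt w :: internalBlocks wt w).filter (· ≠ 0) := by
  induction w with
  | nil => simp [runs, leadingBlock, internalBlocks]
  | cons s w ih =>
    cases hs : wt s with
    | none => simp [runs, leadingBlock, internalBlocks, hs, ih]
    | some n =>
      have hn : n ≠ 0 := fun h => hwt s (h ▸ hs)
      cases w with
      | nil => simp [runs, leadingBlock, internalBlocks, hs, hn]
      | cons s' w =>
        cases hs' : wt s' with
        | none =>
          rw [runs, ih]
          simp [leadingBlock, internalBlocks, hs, hs', hn]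
        | some n' =>
          have hn' : n' ≠ 0 := fun h => hwt s' (h ▸ hs')
          rw [runs, ih]
          simp [leadingBlock, internalBlocks, hs, hs', hn, hn']

end Blocks

/-- The weights defining `(u,h)`-segments: `d` separates, `u` has length `1` and `h` length `k`. -/
def uhWeight (k : ℕ) : Step → Option ℕ
  | Step.u => some 1
  | Step.h => some k
  | Step.d => none

lemma uhRuns_eq_filter_blocks {k : ℕ} (hk : k ≠ 0) (w : List Step) :
    uhRuns k w =
      (leadingBlock (uhWeight k) w :: internalBlocks (uhWeight k) w).filter (· ≠ 0) := by
  have hwt : ∀ s, uhWeight k s ≠ some 0 := by rintro (_ | _ | _) <;> simp [uhWeight, hk]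
  rw [← runs_eq_filter_blocks hwt]
  rfl

lemma leadingBlock_add_sum_internalBlocks (k : ℕ) (w : List Step) :
    leadingBlock (uhWeight k) w + (internalBlocks (uhWeight k) w).sum =
      w.count Step.u + k * w.count Step.h := by
  induction w with
  | nil => rfl
  | cons x w ih => cases x <;> grind [leadingBlock, internalBlocks, uhWeight]

/-- The generalization of `IsNonneg` to paths starting at height `s`. -/
def IsNonnegFrom (s : ℕ) (w : List Step) : Prop :=
  ∀ i : ℕ, (w.take i).count Step.d ≤ (w.take i).count Step.u + s

lemma isNonnegFrom_zero (w : List Step) : IsNonnegFrom 0 w ↔ IsNonneg w := Iff.rfl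

lemma isNonnegFrom_nil (s : ℕ) : IsNonnegFrom s [] := by simp [IsNonnegFrom]

lemma isNonnegFrom_cons_u (s : ℕ) (w : List Step) :
    IsNonnegFrom s (Step.u :: w) ↔ IsNonnegFrom (s + 1) w := by
  rw [IsNonnegFrom, ← Nat.and_forall_add_one]
  simp [IsNonnegFrom, add_assoc, add_comm 1]

lemma isNonnegFrom_succ_cons_d (s : ℕ) (w : List Step) :
    IsNonnegFrom (s + 1) (Step.d :: w) ↔ IsNonnegFrom s w := by
  rw [IsNonnegFrom, ← Nat.and_forall_add_one]
  simp [IsNonnegFrom, ← add_assoc]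

lemma not_isNonnegFrom_zero_cons_d (w : List Step) : ¬ IsNonnegFrom 0 (Step.d :: w) :=
  fun h => by simpa using h 1

lemma isNonnegFrom_cons_h (s : ℕ) (w : List Step) :
    IsNonnegFrom s (Step.h :: w) ↔ IsNonnegFrom s w := by
  rw [IsNonnegFrom, ← Nat.and_forall_add_one]
  simp [IsNonnegFrom]

lemma eq_nil_of_leadingBlock_eq_zero {k : ℕ} (hk : k ≠ 0) {w : List Step} (hw : IsNonneg w)
    (h : leadingBlock (uhWeight k) w = 0) : w = [] := by
  rcases w with _ | ⟨_ | _ | _, w⟩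
  · rfl
  · simp [leadingBlock, uhWeight] at h
  · exact absurd ((isNonnegFrom_zero _).2 hw) (not_isNonnegFrom_zero_cons_d w)
  · simp [leadingBlock, uhWeight, hk] at h

/-- The blocks of `w` cut out by its down-steps have lengths `≡ t, 0, 0, …` modulo `k`. -/
def BlocksCongr {k : ℕ} (t : ZMod k) (w : List Step) : Prop :=
  (leadingBlock (uhWeight k) w : ZMod k) = t ∧
    ∀ b ∈ internalBlocks (uhWeight k) w, (b : ZMod k) = 0

section CongrPaths

variable {k : ℕ}

lemma blocksCongr_nil (t : ZMod k) : BlocksCongr t [] ↔ t = 0 := by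
  simp [BlocksCongr, leadingBlock, internalBlocks, eq_comm]

lemma blocksCongr_cons_u (t : ZMod k) (w : List Step) :
    BlocksCongr t (Step.u :: w) ↔ BlocksCongr (t - 1) w := by
  simp [BlocksCongr, leadingBlock, internalBlocks, uhWeight, eq_sub_iff_add_eq']

lemma blocksCongr_cons_d (t : ZMod k) (w : List Step) :
    BlocksCongr t (Step.d :: w) ↔ t = 0 ∧ BlocksCongr (0 : ZMod k) w := by
  simp [BlocksCongr, leadingBlock, internalBlocks, uhWeight, eq_comm]

lemma blocksCongr_cons_h (t : ZMod k) (w : List Step) :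
    BlocksCongr t (Step.h :: w) ↔ BlocksCongr t w := by
  simp [BlocksCongr, leadingBlock, internalBlocks, uhWeight]

lemma uhRuns_congr_iff_blocksCongr {l : ℕ} (hlk : l < k) {w : List Step} (hw : IsNonneg w) :
    ((uhRuns k w = [] → l = 0) ∧ (∀ a ∈ (uhRuns k w).head?, a % k = l % k) ∧
      ∀ a ∈ (uhRuns k w).tail, a % k = 0) ↔ BlocksCongr (l : ZMod k) w := by
  have hk : k ≠ 0 := by omega
  by_cases hlead : leadingBlock (uhWeight k) w = 0
  · obtain rfl := eq_nil_of_leadingBlock_eq_zero hk hw hlead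
    rw [blocksCongr_nil, ZMod.natCast_eq_zero_iff, Nat.dvd_iff_mod_eq_zero, Nat.mod_eq_of_lt hlk]
    simp [uhRuns, runs]
  · have htail : (∀ b ∈ internalBlocks (uhWeight k) w, b ≠ 0 → b % k = 0) ↔
        ∀ b ∈ internalBlocks (uhWeight k) w, k ∣ b := by
      refine forall₂_congr fun b _ => ?_
      rw [← Nat.dvd_iff_mod_eq_zero]
      exact ⟨fun h => (eq_or_ne b 0).elim (· ▸ dvd_zero k) h, fun h _ => h⟩
    rw [uhRuns_eq_filter_blocks hk, List.filter_cons_of_pos (by simpa using hlead)]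
    simpa [BlocksCongr, ZMod.natCast_eq_natCast_iff', ZMod.natCast_eq_zero_iff] using
      fun _ => htail

/-- The words with `m` up-steps and `j` horizontal steps that lead from height `s` to height `0`
without going below the axis, and whose blocks are `≡ t, 0, 0, …` modulo `k`. These are the
possible remainders of a path counted by `tildeP`, read from height `s` when the current block
still needs a contribution `≡ t`. -/
def congrPaths (t : ZMod k) (s m j : ℕ) : Set (List Step) :=
  {w | IsNonnegFrom s w ∧ w.count Step.u = m ∧ w.count Step.d = m + s ∧ w.count Step.h = j ∧
    BlocksCongr t w}

lemma length_of_mem_congrPaths {t : ZMod k} {s m j : ℕ} {w : List Step}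
    (hw : w ∈ congrPaths t s m j) : w.length = 2 * m + s + j := by
  obtain ⟨-, hu, hd, hh, -⟩ := hw
  rw [Step.length_eq_count_add]
  omega

lemma finite_congrPaths (t : ZMod k) (s m j : ℕ) : (congrPaths t s m j).Finite :=
  (List.finite_length_eq Step (2 * m + s + j)).subset fun _ => length_of_mem_congrPaths

lemma congrPaths_zero_zero_zero_zero : congrPaths (0 : ZMod k) 0 0 0 = {[]} := by
  ext w
  refine ⟨fun hw => List.length_eq_zero_iff.1 (length_of_mem_congrPaths hw), ?_⟩
  rintro rfl
  simp [congrPaths, isNonnegFrom_nil, blocksCongr_nil]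

lemma ncard_congrPaths_eq_add (t : ZMod k) {s m j : ℕ} (h : 2 * m + s + j ≠ 0) :
    (congrPaths t s m j).ncard =
      (List.cons Step.u ⁻¹' congrPaths t s m j).ncard +
        ((List.cons Step.d ⁻¹' congrPaths t s m j).ncard +
          (List.cons Step.h ⁻¹' congrPaths t s m j).ncard) := by
  rw [ncard_eq_sum_preimage_cons (finite_congrPaths t s m j)
    (fun hnil => h (length_of_mem_congrPaths hnil).symm), Step.sum_eq]

lemma preimage_cons_u_congrPaths_zero (t : ZMod k) (s j : ℕ) :
    List.cons Step.u ⁻¹' congrPaths t s 0 j = ∅ := by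
  ext w
  simp [congrPaths]

lemma preimage_cons_u_congrPaths_succ (t : ZMod k) (s m j : ℕ) :
    List.cons Step.u ⁻¹' congrPaths t s (m + 1) j = congrPaths (t - 1) (s + 1) m j := by
  ext w
  simp [congrPaths, isNonnegFrom_cons_u, blocksCongr_cons_u, add_assoc, add_comm 1]

lemma preimage_cons_u_congrPaths_mul_succ (hk : k ≠ 0) (s p j : ℕ) :
    List.cons Step.u ⁻¹' congrPaths (0 : ZMod k) s (k * (p + 1)) j =
      congrPaths ((k - 1 : ℕ) : ZMod k) (s + 1) (k * p + (k - 1)) j := by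
  have hm : k * (p + 1) = k * p + (k - 1) + 1 := by rw [mul_add_one]; omega
  rw [hm, preimage_cons_u_congrPaths_succ, Nat.cast_pred (Nat.pos_of_ne_zero hk),
    ZMod.natCast_self]

lemma preimage_cons_d_congrPaths_zero (t : ZMod k) (m j : ℕ) :
    List.cons Step.d ⁻¹' congrPaths t 0 m j = ∅ := by
  ext w
  simp [congrPaths, not_isNonnegFrom_zero_cons_d]

lemma preimage_cons_d_congrPaths_succ (s m j : ℕ) :
    List.cons Step.d ⁻¹' congrPaths (0 : ZMod k) (s + 1) m j =
      congrPaths (0 : ZMod k) s m j := by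
  ext w
  simp [congrPaths, isNonnegFrom_succ_cons_d, blocksCongr_cons_d, ← add_assoc]

lemma preimage_cons_d_congrPaths_of_ne_zero {t : ZMod k} (ht : t ≠ 0) (s m j : ℕ) :
    List.cons Step.d ⁻¹' congrPaths t s m j = ∅ := by
  ext w
  simp [congrPaths, blocksCongr_cons_d, ht]

lemma preimage_cons_h_congrPaths_zero (t : ZMod k) (s m : ℕ) :
    List.cons Step.h ⁻¹' congrPaths t s m 0 = ∅ := by
  ext w
  simp [congrPaths]

lemma preimage_cons_h_congrPaths_succ (t : ZMod k) (s m j : ℕ) :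
    List.cons Step.h ⁻¹' congrPaths t s m (j + 1) = congrPaths t s m j := by
  ext w
  simp [congrPaths, isNonnegFrom_cons_h, blocksCongr_cons_h]

lemma ncard_congrPaths_zero_eq_add (t : ZMod k) {s m : ℕ} (h : 2 * m + s ≠ 0) :
    (congrPaths t s m 0).ncard =
      (List.cons Step.u ⁻¹' congrPaths t s m 0).ncard +
        (List.cons Step.d ⁻¹' congrPaths t s m 0).ncard := by
  rw [ncard_congrPaths_eq_add t (by simpa using h), preimage_cons_h_congrPaths_zero,
    Set.ncard_empty, add_zero]

theorem ncard_congrPaths_eq_choose_mul (t : ZMod k) (s m j : ℕ) :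
    (congrPaths t s m j).ncard = (2 * m + s + j).choose j * (congrPaths t s m 0).ncard := by
  induction hn : 2 * m + s + j generalizing t s m j with
  | zero =>
    obtain rfl : j = 0 := by omega
    simp
  | succ n ih =>
    rcases j with _ | j
    · simp
    have hu : (List.cons Step.u ⁻¹' congrPaths t s m (j + 1)).ncard =
        n.choose (j + 1) * (List.cons Step.u ⁻¹' congrPaths t s m 0).ncard := by
      rcases m with _ | m
      · simp [preimage_cons_u_congrPaths_zero]
      · simpa only [preimage_cons_u_congrPaths_succ] using ih _ _ _ _ (by omega)
    have hd : (List.cons Step.d ⁻¹' congrPaths t s m (j + 1)).ncard =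
        n.choose (j + 1) * (List.cons Step.d ⁻¹' congrPaths t s m 0).ncard := by
      rcases eq_or_ne t 0 with rfl | ht
      · rcases s with _ | s
        · simp [preimage_cons_d_congrPaths_zero]
        · simpa only [preimage_cons_d_congrPaths_succ] using ih _ _ _ _ (by omega)
      · simp [preimage_cons_d_congrPaths_of_ne_zero ht]
    have hud : n.choose (j + 1) * (congrPaths t s m 0).ncard = n.choose (j + 1) *
        ((List.cons Step.u ⁻¹' congrPaths t s m 0).ncard +
          (List.cons Step.d ⁻¹' congrPaths t s m 0).ncard) := by
      rcases eq_or_ne (2 * m + s) 0 with h0 | h0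
      · simp [Nat.choose_eq_zero_of_lt (show n < j + 1 by omega)]
      · rw [ncard_congrPaths_zero_eq_add t h0]
    rw [ncard_congrPaths_eq_add t (by omega), hu, hd, preimage_cons_h_congrPaths_succ,
      ih t s m j (by omega), Nat.choose_succ_succ, add_mul, hud]
    ring

lemma natCast_eq_of_mem_congrPaths {t : ZMod k} {s m j : ℕ} {w : List Step}
    (hw : w ∈ congrPaths t s m j) : (m : ZMod k) = t := by
  obtain ⟨-, rfl, -, -, hlead, hint⟩ := hw
  have hsum : ((internalBlocks (uhWeight k) w).sum : ZMod k) = 0 := by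
    rw [Nat.cast_list_sum]
    exact List.sum_eq_zero (by simpa using hint)
  have hweight := congrArg (Nat.cast : ℕ → ZMod k) (leadingBlock_add_sum_internalBlocks k w)
  simpa [hlead, hsum] using hweight.symm

end CongrPaths

/-- The Raney (Fuss–Catalan) number `r / (p q + r) * C(p q + r, p)` with `q = k + 1` and
`r = a + 1`. The shifted parameters keep all denominators positive. -/
def raney (k p a : ℕ) : ℚ := ((a : ℚ) + 1) / (k * p + a + 1) * Nat.choose ((k + 1) * p + a) p

lemma raney_zero (k a : ℕ) : raney k 0 a = 1 := by
  have : (a : ℚ) + 1 ≠ 0 := by positivity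
  simp [raney, this]

lemma raney_succ_zero (k p : ℕ) : raney k (p + 1) 0 = raney k p k := by
  have hchoose : (((k + 1) * p + k + 1).choose (p + 1) : ℚ) =
      (k + 1) * ((k + 1) * p + k).choose p := by
    have h := Nat.add_one_mul_choose_eq ((k + 1) * p + k) p
    refine mul_right_cancel₀ (by positivity : (p : ℚ) + 1 ≠ 0) ?_
    calc (((k + 1) * p + k + 1).choose (p + 1) : ℚ) * (p + 1)
        = ((((k + 1) * p + k + 1) * ((k + 1) * p + k).choose p : ℕ) : ℚ) := by
          exact_mod_cast h.symm
      _ = (k + 1) * ((k + 1) * p + k).choose p * (p + 1) := by push_cast; ring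
  rw [raney, raney, show (k + 1) * (p + 1) + 0 = (k + 1) * p + k + 1 by ring, hchoose]
  push_cast
  field_simp
  ring

lemma raney_succ_succ (k p a : ℕ) :
    raney k (p + 1) (a + 1) = raney k p (a + 1 + k) + raney k (p + 1) a := by
  set n := (k + 1) * p + k + a + 1 with hn
  have hchoose : (n.choose (p + 1) : ℚ) = n.choose p * (k * p + k + a + 1) / (p + 1) := by
    have h := Nat.choose_succ_right_eq n p
    rw [show n - p = k * p + k + a + 1 by rw [hn, add_one_mul k p]; omega] at h
    rw [eq_div_iff (by positivity)]
    exact_mod_cast h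
  simp only [raney]
  rw [show (k + 1) * (p + 1) + (a + 1) = n + 1 by rw [hn]; ring,
    show (k + 1) * p + (a + 1 + k) = n by rw [hn]; ring,
    show (k + 1) * (p + 1) + a = n by rw [hn]; ring, Nat.choose_succ_succ]
  push_cast
  rw [hchoose]
  field_simp
  ring

theorem ncard_congrPaths_eq_raney {k : ℕ} : ∀ p t s : ℕ, t < k →
    ((congrPaths (t : ZMod k) s (k * p + t) 0).ncard : ℚ) = raney k p (s + t)
  | 0, 0, 0, _ => by simp [congrPaths_zero_zero_zero_zero, raney_zero]
  | 0, 0, s + 1, ht => by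
    have ih := ncard_congrPaths_eq_raney 0 0 s ht
    simp only [Nat.cast_zero, mul_zero, add_zero, raney_zero] at ih ⊢
    simpa [ncard_congrPaths_zero_eq_add, preimage_cons_u_congrPaths_zero,
      preimage_cons_d_congrPaths_succ] using ih
  | p + 1, 0, 0, hk => by
    have hu := ncard_congrPaths_eq_raney p (k - 1) 1 (Nat.sub_one_lt_of_lt hk)
    rw [add_zero, Nat.cast_zero, ncard_congrPaths_zero_eq_add _ (by positivity),
      preimage_cons_u_congrPaths_mul_succ hk.ne', preimage_cons_d_congrPaths_zero, Set.ncard_empty,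
      add_zero, hu, add_zero, raney_succ_zero, Nat.add_sub_cancel' hk]
  | p + 1, 0, s + 1, hk => by
    have hu := ncard_congrPaths_eq_raney p (k - 1) (s + 2) (Nat.sub_one_lt_of_lt hk)
    have hd := ncard_congrPaths_eq_raney (p + 1) 0 s hk
    rw [add_zero, add_zero, Nat.cast_zero] at hd
    rw [add_zero, Nat.cast_zero, ncard_congrPaths_zero_eq_add _ (by positivity),
      preimage_cons_u_congrPaths_mul_succ hk.ne', preimage_cons_d_congrPaths_succ, Nat.cast_add,
      hu, hd, add_zero, raney_succ_succ, show s + 2 + (k - 1) = s + 1 + k by omega]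
  | p, t + 1, s, ht => by
    have ih := ncard_congrPaths_eq_raney (k := k) p t (s + 1) (by omega)
    have hres : ((t + 1 : ℕ) : ZMod k) ≠ 0 := by
      rw [Ne, ZMod.natCast_eq_zero_iff]
      exact Nat.not_dvd_of_pos_of_lt t.succ_pos ht
    rw [ncard_congrPaths_zero_eq_add _ (by positivity),
      preimage_cons_d_congrPaths_of_ne_zero hres, Set.ncard_empty, add_zero, ← add_assoc,
      preimage_cons_u_congrPaths_succ, Nat.cast_add_one, add_sub_cancel_right, ih,
      show s + 1 + t = s + (t + 1) by ring]
termination_by p t s => (p, t, s)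

lemma setOf_tildeP_eq_biUnion_congrPaths {k l : ℕ} (r : ℕ) (hlk : l < k) :
    {w : List Step | IsNonneg w ∧ w.count Step.u = w.count Step.d ∧
      2 * w.count Step.u + k * w.count Step.h = k * r + 2 * l ∧
      (uhRuns k w = [] → l = 0) ∧
      (∀ a ∈ (uhRuns k w).head?, a % k = l % k) ∧
      (∀ a ∈ (uhRuns k w).tail, a % k = 0)} =
    ⋃ p ∈ (range (r / 2 + 1) : Set ℕ), congrPaths (l : ZMod k) 0 (k * p + l) (r - 2 * p) := by
  ext w
  simp only [Set.mem_ofPred_eq, Set.mem_iUnion, coe_range, Set.mem_Iio, exists_prop]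
  constructor
  · rintro ⟨hw, hud, hlen, hruns⟩
    have hmem : w ∈ congrPaths (l : ZMod k) 0 (w.count Step.u) (w.count Step.h) :=
      ⟨(isNonnegFrom_zero w).2 hw, rfl, hud.symm, rfl,
        (uhRuns_congr_iff_blocksCongr hlk hw).1 hruns⟩
    obtain ⟨p, hp⟩ : ∃ p, w.count Step.u = k * p + l := by
      have hmod := (ZMod.natCast_eq_natCast_iff' _ _ k).1 (natCast_eq_of_mem_congrPaths hmem)
      rw [Nat.mod_eq_of_lt hlk] at hmod
      exact ⟨w.count Step.u / k, by rw [← hmod, Nat.div_add_mod]⟩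
    have hr : 2 * p + w.count Step.h = r :=
      Nat.eq_of_mul_eq_mul_left (by omega : 0 < k) (by rw [hp] at hlen; linarith)
    refine ⟨p, by omega, ?_⟩
    rwa [← hp, show r - 2 * p = w.count Step.h by omega]
  · rintro ⟨p, hp, hw, hu, hd, hh, hblocks⟩
    rw [isNonnegFrom_zero] at hw
    obtain ⟨q, rfl⟩ : ∃ q, r = 2 * p + q := ⟨r - 2 * p, by omega⟩
    refine ⟨hw, by omega, ?_, (uhRuns_congr_iff_blocksCongr hlk hw).2 hblocks⟩
    rw [hu, hh, Nat.add_sub_cancel_left]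
    ring

theorem tildeP_eq_sum_ncard_congrPaths {k l : ℕ} (r : ℕ) (hlk : l < k) :
    tildeP k l r =
      ∑ p ∈ range (r / 2 + 1), (congrPaths (l : ZMod k) 0 (k * p + l) (r - 2 * p)).ncard := by
  rw [tildeP, setOf_tildeP_eq_biUnion_congrPaths r hlk,
    Set.Finite.ncard_biUnion (finite_toSet _) (fun _ _ => finite_congrPaths _ _ _ _),
    finsum_mem_coe_finset]
  intro p hp q hq hpq
  refine Set.disjoint_left.2 fun w hwp hwq => hpq ?_
  have hj : r - 2 * p = r - 2 * q := hwp.2.2.2.1.symm.trans hwq.2.2.2.1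
  simp only [coe_range, Set.mem_Iio] at hp hq
  omega

theorem stmt12 (k l r : ℕ) (hk : 1 ≤ k) (hl : l ≤ k - 1) :
    (tildeP k l r : ℚ) =
      ∑ p ∈ Finset.range (r / 2 + 1),
        ((l : ℚ) + 1) / (k * p + l + 1) * Nat.choose ((k + 1) * p + l) p *
          Nat.choose (r + 2 * (k - 1) * p + 2 * l) (r - 2 * p) := by
  have hlk : l < k := by omega
  rw [tildeP_eq_sum_ncard_congrPaths r hlk, Nat.cast_sum]
  refine sum_congr rfl fun p hp => ?_
  have hlength : 2 * (k * p + l) + 0 + (r - 2 * p) = r + 2 * (k - 1) * p + 2 * l := by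
    obtain ⟨k, rfl⟩ : ∃ k', k = k' + 1 := ⟨k - 1, by omega⟩
    obtain ⟨q, rfl⟩ : ∃ q, r = 2 * p + q := ⟨r - 2 * p, by grind⟩
    simp only [Nat.add_sub_cancel_left, Nat.add_sub_cancel]
    ring
  rw [ncard_congrPaths_eq_choose_mul, hlength, Nat.cast_mul, ncard_congrPaths_eq_raney p l 0 hlk,
    zero_add, raney, mul_comm]
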